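/- arXiv:2509.03942 — 8 statements merged into one kernel-verified Lean document; each statement's English description precedes it below -/
import Mathlib

section
/- For every x ∈ ℝ and t > 0, the function p satisfies the Fokker–Planck equation ∂p/∂t (x, t) = −ν · ∂p/∂x (x, t) + D · ∂²p/∂x² (x, t). -/
open Real

/-- The free advection–diffusion kernel `U(x, t, η)`. -/
noncomputable def U (D ν : ℝ) (x t η : ℝ) : ℝ :=
  (1 / Real.sqrt (4 * Real.pi * D * t)) * Real.exp (-(x - η - ν * t) ^ 2 / (4 * D * t))

/-- The absorbing-boundary solution `p(x, t) = U(x, t, x₀) − e^{(ν/D)(L − x₀)} U(x, t, 2L − x₀)`. -/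
noncomputable def pAbs (D ν L x₀ : ℝ) (x t : ℝ) : ℝ :=
  U D ν x t x₀ - Real.exp ((ν / D) * (L - x₀)) * U D ν x t (2 * L - x₀)

/-!
Differentiating the kernel in `x` or in `t` multiplies it by a rational function of `z = x - η - νt`
and `t`, and comparing these factors shows that it solves the Fokker–Planck equation for every
source point `η`. The equation is linear and the weight of the image at `2L - x₀` is independent of
`x` and `t`, so subtracting the weighted image from the source at `x₀` gives another solution; the
position and the weight of the image matter only for the boundary condition at `L`.
-/

/-- `u` satisfies the Fokker–Planck equation `∂u/∂t = -ν ∂u/∂x + D ∂²u/∂x²` with diffusivity `D` and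
drift `ν` at the point `(x, t)` in the classical sense. The regularity of `u` is part of the notion,
because `deriv` is zero where the derivative does not exist. -/
structure SolvesFokkerPlanckAt (D ν : ℝ) (u : ℝ → ℝ → ℝ) (x t : ℝ) : Prop where
  differentiableAt_time : DifferentiableAt ℝ (fun τ => u x τ) t
  contDiffAt_space : ContDiffAt ℝ 2 (fun y => u y t) x
  deriv_time_eq : deriv (fun τ => u x τ) t =
    -ν * deriv (fun y => u y t) x + D * deriv (deriv fun y => u y t) x

namespace SolvesFokkerPlanckAt

variable {D ν x t : ℝ} {u v : ℝ → ℝ → ℝ}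

theorem const_mul (c : ℝ) (hu : SolvesFokkerPlanckAt D ν u x t) :
    SolvesFokkerPlanckAt D ν (fun y τ => c * u y τ) x t where
  differentiableAt_time := hu.differentiableAt_time.const_mul c
  contDiffAt_space := contDiffAt_const.mul hu.contDiffAt_space
  deriv_time_eq := by
    simp only [deriv_const_mul_field', deriv_const_mul_field, hu.deriv_time_eq]
    ring

theorem sub (hu : SolvesFokkerPlanckAt D ν u x t) (hv : SolvesFokkerPlanckAt D ν v x t) :
    SolvesFokkerPlanckAt D ν (fun y τ => u y τ - v y τ) x t where
  differentiableAt_time := hu.differentiableAt_time.sub hv.differentiableAt_time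
  contDiffAt_space := hu.contDiffAt_space.sub hv.contDiffAt_space
  deriv_time_eq := by
    have deriv_space := deriv_fun_sub (hu.contDiffAt_space.differentiableAt two_ne_zero)
      (hv.contDiffAt_space.differentiableAt two_ne_zero)
    have deriv_deriv_space := iteratedDeriv_fun_sub hu.contDiffAt_space hv.contDiffAt_space
    simp only [iteratedDeriv_succ, iteratedDeriv_zero] at deriv_deriv_space
    rw [deriv_fun_sub hu.differentiableAt_time hv.differentiableAt_time, hu.deriv_time_eq,
      hv.deriv_time_eq, deriv_space, deriv_deriv_space]
    ring

end SolvesFokkerPlanckAt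

theorem hasDerivAt_one_div_sqrt_const_mul {c t : ℝ} (hct : 0 < c * t) :
    HasDerivAt (fun τ => 1 / √(c * τ)) (-1 / (2 * t) * (1 / √(c * t))) t := by
  have hc : c ≠ 0 := left_ne_zero_of_mul hct.ne'
  have ht : t ≠ 0 := right_ne_zero_of_mul hct.ne'
  have hsqrt : √(c * t) ≠ 0 := (Real.sqrt_pos.mpr hct).ne'
  have hinv := (((hasDerivAt_id t).const_mul c).sqrt hct.ne').inv hsqrt
  simp only [one_div]
  refine hinv.congr_deriv ?_
  simp only [id, Real.sq_sqrt hct.le]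
  field_simp

theorem hasDerivAt_neg_sub_mul_sq_div {c t : ℝ} (a b : ℝ) (hc : c ≠ 0) (ht : t ≠ 0) :
    HasDerivAt (fun τ => -(a - b * τ) ^ 2 / (c * τ))
      (2 * b * (a - b * t) / (c * t) + (a - b * t) ^ 2 / (c * t ^ 2)) t := by
  have hnum := ((((hasDerivAt_id t).const_mul b).const_sub a).fun_pow 2).fun_neg
  have hden := (hasDerivAt_id t).const_mul c
  refine (hnum.fun_div hden (mul_ne_zero hc ht)).congr_deriv ?_
  simp only [id]
  field_simp
  ring

section Kernel

variable (D ν x t η : ℝ)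

theorem contDiff_U_space {n : WithTop ℕ∞} : ContDiff ℝ n fun y => U D ν y t η := by
  unfold U
  fun_prop

theorem hasDerivAt_U_space :
    HasDerivAt (fun y => U D ν y t η) (-(x - η - ν * t) / (2 * D * t) * U D ν x t η) x := by
  have hshift : HasDerivAt (fun y => y - η - ν * t) 1 x :=
    ((hasDerivAt_id x).sub_const η).sub_const (ν * t)
  refine ((hshift.fun_pow 2).fun_neg.div_const (4 * D * t)).exp.const_mul
    (1 / √(4 * π * D * t)) |>.congr_deriv ?_
  simp only [U]
  ring

theorem deriv_U_space :
    deriv (fun y => U D ν y t η) =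
      fun y => -(y - η - ν * t) / (2 * D * t) * U D ν y t η :=
  funext fun y => (hasDerivAt_U_space D ν y t η).deriv

theorem deriv_deriv_U_space :
    deriv (deriv fun y => U D ν y t η) x =
      ((x - η - ν * t) ^ 2 / (2 * D * t) ^ 2 - 1 / (2 * D * t)) * U D ν x t η := by
  have hfactor : HasDerivAt (fun y => -(y - η - ν * t) / (2 * D * t)) (-1 / (2 * D * t)) x :=
    (((hasDerivAt_id x).sub_const η).sub_const (ν * t)).fun_neg.div_const _
  rw [deriv_U_space, (hfactor.fun_mul (hasDerivAt_U_space D ν x t η)).deriv]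
  ring

variable {D t}

theorem hasDerivAt_U_time (hDt : 0 < D * t) :
    HasDerivAt (fun τ => U D ν x τ η)
      ((-1 / (2 * t) + ν * (x - η - ν * t) / (2 * D * t)
        + (x - η - ν * t) ^ 2 / (4 * D * t ^ 2)) * U D ν x t η) t := by
  have hprefactor : HasDerivAt (fun τ => 1 / √(4 * π * D * τ))
      (-1 / (2 * t) * (1 / √(4 * π * D * t))) t :=
    hasDerivAt_one_div_sqrt_const_mul (by rw [mul_assoc]; positivity)
  have hexponent := hasDerivAt_neg_sub_mul_sq_div (x - η) ν
    (mul_ne_zero four_ne_zero (left_ne_zero_of_mul hDt.ne')) (right_ne_zero_of_mul hDt.ne')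
  refine (hprefactor.fun_mul hexponent.exp).congr_deriv ?_
  simp only [U]
  ring

theorem solvesFokkerPlanckAt_U (hDt : 0 < D * t) :
    SolvesFokkerPlanckAt D ν (fun y τ => U D ν y τ η) x t where
  differentiableAt_time := (hasDerivAt_U_time ν x η hDt).differentiableAt
  contDiffAt_space := (contDiff_U_space D ν t η).contDiffAt
  deriv_time_eq := by
    have hD : D ≠ 0 := left_ne_zero_of_mul hDt.ne'
    rw [(hasDerivAt_U_time ν x η hDt).deriv, (hasDerivAt_U_space D ν x t η).deriv,
      deriv_deriv_U_space]
    field_simp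
    ring

end Kernel

/-- The case `D < 0`, `t < 0` is the image of `0 < D`, `0 < t` under the time reversal
`(D, ν, t) ↦ (-D, -ν, -t)`, which preserves both `U` and the equation. -/
theorem pAbs_fokkerPlanck_general (D ν L x₀ x t : ℝ) (hDt : 0 < D * t) :
    SolvesFokkerPlanckAt D ν (pAbs D ν L x₀) x t :=
  (solvesFokkerPlanckAt_U ν x x₀ hDt).sub
    ((solvesFokkerPlanckAt_U ν x (2 * L - x₀) hDt).const_mul (exp ((ν / D) * (L - x₀))))

/-- For every `x ∈ ℝ` and `t > 0`, the absorbing-boundary solution satisfies the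
Fokker–Planck equation `∂p/∂t = −ν ∂p/∂x + D ∂²p/∂x²`. -/
theorem pAbs_fokkerPlanck (D ν L x₀ : ℝ) (hD : 0 < D) (hx₀ : x₀ < L) :
    ∀ (x t : ℝ), 0 < t →
      deriv (fun τ => pAbs D ν L x₀ x τ) t =
        -ν * deriv (fun y => pAbs D ν L x₀ y t) x
          + D * deriv (deriv (fun y => pAbs D ν L x₀ y t)) x :=
  fun x t ht => (pAbs_fokkerPlanck_general D ν L x₀ x t (mul_pos hD ht)).deriv_time_eq
end

section
/- For every t > 0, the function p satisfies the absorbing boundary condition p(L, t) = 0. -/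
open Real

/-!
The kernel satisfies detailed balance with respect to the weight `exp (ν x / D)`: its logarithm
splits into a part even in `x - η` and the drift term `ν (x - η) / (2 D)`, so exchanging source and
observation point costs the time-independent factor `exp (ν (x - η) / D)`. Seen from the boundary
point `L`, the image source `2 L - x₀` is displaced as `L` is from `x₀`, and the factor in `pAbs` is
exactly the detailed-balance one.
-/

theorem U_eq_of_sub_eq_sub {x η x' η' : ℝ} (D ν t : ℝ) (h : x - η = x' - η') :
    U D ν x t η = U D ν x' t η' := by
  simp only [U, h]

theorem U_exponent_swap {D t : ℝ} (hD : D ≠ 0) (ht : t ≠ 0) (ν x η : ℝ) :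
    -(x - η - ν * t) ^ 2 / (4 * D * t)
      = ν / D * (x - η) + -(η - x - ν * t) ^ 2 / (4 * D * t) := by
  field_simp
  ring

theorem U_detailed_balance {D t : ℝ} (hD : D ≠ 0) (ht : t ≠ 0) (ν x η : ℝ) :
    U D ν x t η = exp (ν / D * (x - η)) * U D ν η t x := by
  rw [U, U, U_exponent_swap hD ht, exp_add, mul_left_comm]

theorem pAbs_boundary_condition_general {D t : ℝ} (hD : 0 < D) (ht : 0 < t) (ν L x₀ : ℝ) :
    pAbs D ν L x₀ L t = 0 := by
  have image_eq_swap : U D ν L t (2 * L - x₀) = U D ν x₀ t L :=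
    U_eq_of_sub_eq_sub D ν t (by ring)
  rw [pAbs, image_eq_swap, sub_eq_zero]
  exact U_detailed_balance hD.ne' ht.ne' ν L x₀

/-- For every `t > 0`, the absorbing-boundary solution satisfies `p(L, t) = 0`. -/
theorem pAbs_boundary_condition (D ν L x₀ : ℝ) (hD : 0 < D) (hx₀ : x₀ < L) :
    ∀ t : ℝ, 0 < t → pAbs D ν L x₀ L t = 0 :=
  fun _ ht => pAbs_boundary_condition_general hD ht ν L x₀
end

section
/- For every x < L and t > 0, the absorbing-boundary solution is strictly positive: p(x, t) > 0. -/
open Real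

/-!
The weight of the image source cancels the effect of the drift: the weighted image term is the
source term damped by `exp (-((L - x₀) * (L - x) / (D * t)))`. It is therefore smaller than the
source term exactly when `x` and `x₀` lie strictly on the same side of `L`.
-/

section

variable {D t : ℝ} (ν L x₀ x : ℝ)

lemma U_pos (hDt : 0 < D * t) : 0 < U D ν x t x₀ := by
  have hvar : 0 < 4 * π * D * t := by
    rw [mul_assoc]
    positivity
  unfold U
  positivity

lemma exp_mul_U_image (hD : D ≠ 0) (ht : t ≠ 0) :
    exp (ν / D * (L - x₀)) * U D ν x t (2 * L - x₀) =
      exp (-((L - x₀) * (L - x) / (D * t))) * U D ν x t x₀ := by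
  have hexponent : ν / D * (L - x₀) + -(x - (2 * L - x₀) - ν * t) ^ 2 / (4 * D * t) =
      -((L - x₀) * (L - x) / (D * t)) + -(x - x₀ - ν * t) ^ 2 / (4 * D * t) := by
    field_simp
    ring
  unfold U
  rw [mul_left_comm, ← exp_add, hexponent, exp_add, mul_left_comm]

lemma pAbs_eq_mul_U (hD : D ≠ 0) (ht : t ≠ 0) :
    pAbs D ν L x₀ x t = (1 - exp (-((L - x₀) * (L - x) / (D * t)))) * U D ν x t x₀ := by
  rw [pAbs, exp_mul_U_image ν L x₀ x hD ht, one_sub_mul]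

theorem pAbs_pos_general (hDt : 0 < D * t) :
    0 < pAbs D ν L x₀ x t ↔ 0 < (L - x₀) * (L - x) := by
  obtain ⟨hD, ht⟩ := mul_ne_zero_iff.1 hDt.ne'
  rw [pAbs_eq_mul_U ν L x₀ x hD ht, mul_pos_iff_of_pos_right (U_pos ν x₀ x hDt), sub_pos,
    exp_lt_one_iff, neg_lt_zero, div_pos_iff_of_pos_right hDt]

end

/-- For every `x < L` and `t > 0`, the absorbing-boundary solution is strictly positive. -/
theorem pAbs_pos (D ν L x₀ : ℝ) (hD : 0 < D) (hx₀ : x₀ < L) :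
    ∀ (x t : ℝ), x < L → 0 < t → 0 < pAbs D ν L x₀ x t := fun x _ hx ht =>
  (pAbs_pos_general ν L x₀ x (mul_pos hD ht)).2 (mul_pos (sub_pos.2 hx₀) (sub_pos.2 hx))
end

section
/- The absorbing-boundary solution satisfies the Dirac delta initial condition at x₀: for every bounded continuous function f : ℝ → ℝ, the integral ∫_{−∞}^{L} f(x) · p(x, t) dx converges to f(x₀) as t → 0⁺. -/
/-!
As a function of `x`, `U D ν x t η` is the density of the Gaussian law with mean `η + ν * t` and
variance `2 * D * t`, that is, of `η + ν * t + √(2 * D * t) * Y` with `Y` standard normal. These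
variables converge pointwise to `η` as `t → 0⁺`, so by bounded convergence the integral of a bounded
`h` against `U` tends to `h η` as soon as `h` is continuous at `η`. Take for `h` the extension of
`f` by zero from `(-∞, L]`: near the source point `x₀ < L` it is `f`, while near the image point
`2 * L - x₀ > L` it vanishes, so the image term disappears in the limit.
-/

open Real MeasureTheory Filter Topology

open ProbabilityTheory
open scoped ENNReal NNReal

lemma gaussianReal_eq_map_gaussianReal_zero_one (m : ℝ) (v : ℝ≥0) :
    gaussianReal m v = (gaussianReal 0 1).map fun y => m + √v * y := by
  have hv : NNReal.mk (√v ^ 2) (sq_nonneg _) = v := NNReal.eq (Real.sq_sqrt v.coe_nonneg)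
  have hscale : (gaussianReal 0 1).map (√v * ·) = gaussianReal 0 v := by
    rw [gaussianReal_map_const_mul, mul_zero, mul_one, hv]
  have hcomp := Measure.map_map (μ := gaussianReal 0 1) (measurable_const_add m)
    (measurable_const_mul √v)
  rw [hscale, gaussianReal_map_const_add, zero_add] at hcomp
  exact hcomp

lemma quasiMeasurePreserving_add_sqrt_mul (m : ℝ) {v : ℝ≥0} (hv : v ≠ 0) :
    Measure.QuasiMeasurePreserving (fun y => m + √v * y) (gaussianReal 0 1) volume :=
  ⟨by fun_prop, gaussianReal_eq_map_gaussianReal_zero_one m v ▸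
    gaussianReal_absolutelyContinuous m hv⟩

lemma U_eq_gaussianPDFReal {D t : ℝ} (hD : 0 ≤ D) (ht : 0 ≤ t) (ν η x : ℝ) :
    U D ν x t η = gaussianPDFReal (η + ν * t) (2 * D * t).toNNReal x := by
  rw [U, gaussianPDFReal, Real.coe_toNNReal _ (by positivity), one_div]
  ring_nf

lemma integrable_U {D t : ℝ} (hD : 0 ≤ D) (ht : 0 ≤ t) (ν η : ℝ) :
    Integrable fun x => U D ν x t η := by
  simpa only [U_eq_gaussianPDFReal hD ht] using integrable_gaussianPDFReal _ _

section ApproximateIdentity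

variable {E : Type*} [NormedAddCommGroup E] [NormedSpace ℝ E] {f : ℝ → E}

lemma integral_gaussianReal_eq_integral_zero_one {m : ℝ} {v : ℝ≥0}
    (hf : AEStronglyMeasurable f (gaussianReal m v)) :
    ∫ x, f x ∂gaussianReal m v = ∫ y, f (m + √v * y) ∂gaussianReal 0 1 := by
  rw [gaussianReal_eq_map_gaussianReal_zero_one] at hf ⊢
  exact integral_map (by fun_prop) hf

lemma integral_U_smul {D t : ℝ} (hD : 0 < D) (ht : 0 < t) (ν η : ℝ) (f : ℝ → E) :
    ∫ x, U D ν x t η • f x = ∫ x, f x ∂gaussianReal (η + ν * t) (2 * D * t).toNNReal := by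
  have hv : (2 * D * t).toNNReal ≠ 0 := (Real.toNNReal_pos.2 (by positivity)).ne'
  simp only [integral_gaussianReal_eq_integral_smul hv, U_eq_gaussianPDFReal hD.le ht.le]

lemma integrableOn_U_smul {D t : ℝ} (hD : 0 ≤ D) (ht : 0 ≤ t) (ν η : ℝ) {s : Set ℝ}
    (hf : MemLp f ∞ (volume.restrict s)) : IntegrableOn (fun x => U D ν x t η • f x) s :=
  (integrable_U hD ht ν η).integrableOn.smul_of_top_left hf

variable [CompleteSpace E]

lemma tendsto_integral_gaussianReal {ι : Type*} {l : Filter ι} [l.IsCountablyGenerated]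
    {m : ι → ℝ} {v : ι → ℝ≥0} {a : ℝ} (hm : Tendsto m l (𝓝 a)) (hv : Tendsto v l (𝓝[≠] 0))
    (hf : MemLp f ∞) (hfa : ContinuousAt f a) :
    Tendsto (fun i => ∫ x, f x ∂gaussianReal (m i) (v i)) l (𝓝 (f a)) := by
  have hv_ne : ∀ᶠ i in l, v i ≠ 0 := hv.eventually eventually_mem_nhdsWithin
  have hv_zero : Tendsto (fun i => √(v i : ℝ)) l (𝓝 0) := by
    have hsqrt : Continuous fun r : ℝ≥0 => √(r : ℝ) := by fun_prop
    exact (hsqrt.tendsto' 0 0 (by simp)).comp (tendsto_nhds_of_tendsto_nhdsWithin hv)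
  have hstd : Tendsto (fun i => ∫ y, f (m i + √(v i) * y) ∂gaussianReal 0 1) l
      (𝓝 (∫ _, f a ∂gaussianReal 0 1)) := by
    refine tendsto_integral_filter_of_norm_le_const ?_ ⟨lpNorm f ∞ volume, ?_⟩
      (ae_of_all _ fun y => hfa.tendsto.comp ?_)
    · filter_upwards [hv_ne] with i hi
      exact hf.aestronglyMeasurable.comp_quasiMeasurePreserving
        (quasiMeasurePreserving_add_sqrt_mul (m i) hi)
    · filter_upwards [hv_ne] with i hi
      exact (quasiMeasurePreserving_add_sqrt_mul (m i) hi).ae (ae_le_lpNorm_exponent_top hf)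
    · simpa using hm.add (hv_zero.mul_const y)
  rw [integral_const, probReal_univ, one_smul] at hstd
  refine hstd.congr' ?_
  filter_upwards [hv_ne] with i hi
  exact (integral_gaussianReal_eq_integral_zero_one
    (hf.aestronglyMeasurable.mono_ac (gaussianReal_absolutelyContinuous _ hi))).symm

lemma tendsto_integral_U_smul {D : ℝ} (hD : 0 < D) (ν η : ℝ) (hf : MemLp f ∞)
    (hfη : ContinuousAt f η) :
    Tendsto (fun t => ∫ x, U D ν x t η • f x) (𝓝[>] 0) (𝓝 (f η)) := by
  have hmean : Tendsto (fun t => η + ν * t) (𝓝[>] 0) (𝓝 η) :=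
    (Continuous.tendsto' (by fun_prop) 0 η (by simp)).mono_left nhdsWithin_le_nhds
  have hvar : Tendsto (fun t => (2 * D * t).toNNReal) (𝓝[>] 0) (𝓝[≠] 0) := by
    refine tendsto_nhdsWithin_iff.2
      ⟨(Continuous.tendsto' (by fun_prop) 0 0 (by simp)).mono_left nhdsWithin_le_nhds, ?_⟩
    filter_upwards [self_mem_nhdsWithin] with t (ht : 0 < t)
    exact (Real.toNNReal_pos.2 (by positivity)).ne'
  refine (tendsto_integral_gaussianReal hmean hvar hf hfη).congr' ?_
  filter_upwards [self_mem_nhdsWithin] with t ht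
  exact (integral_U_smul hD ht ν η f).symm

variable {s : Set ℝ}

lemma tendsto_setIntegral_U_smul_indicator {D : ℝ} (hD : 0 < D) (ν η : ℝ)
    (hs : MeasurableSet s) (hf : MemLp f ∞ (volume.restrict s))
    (hfη : ContinuousAt (s.indicator f) η) :
    Tendsto (fun t => ∫ x in s, U D ν x t η • f x) (𝓝[>] 0) (𝓝 (s.indicator f η)) := by
  have hind : MemLp (s.indicator f) ∞ := (memLp_indicator_iff_restrict hs).2 hf
  simpa only [← Set.indicator_smul, integral_indicator hs] using
    tendsto_integral_U_smul hD ν η hind hfη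

lemma tendsto_setIntegral_U_smul_of_mem_nhds {D : ℝ} (hD : 0 < D) (ν : ℝ) {η : ℝ}
    (hs : MeasurableSet s) (hsη : s ∈ 𝓝 η) (hf : MemLp f ∞ (volume.restrict s))
    (hfη : ContinuousAt f η) :
    Tendsto (fun t => ∫ x in s, U D ν x t η • f x) (𝓝[>] 0) (𝓝 (f η)) := by
  have hind : s.indicator f =ᶠ[𝓝 η] f := Set.eqOn_indicator.eventuallyEq_of_mem hsη
  rw [← hind.eq_of_nhds]
  exact tendsto_setIntegral_U_smul_indicator hD ν η hs hf (hfη.congr hind.symm)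

lemma tendsto_setIntegral_U_smul_of_compl_mem_nhds {D : ℝ} (hD : 0 < D) (ν : ℝ) {η : ℝ}
    (hs : MeasurableSet s) (hsη : sᶜ ∈ 𝓝 η) (hf : MemLp f ∞ (volume.restrict s)) :
    Tendsto (fun t => ∫ x in s, U D ν x t η • f x) (𝓝[>] 0) (𝓝 0) := by
  have hind : s.indicator f =ᶠ[𝓝 η] fun _ => 0 := Set.eqOn_indicator'.eventuallyEq_of_mem hsη
  rw [← hind.eq_of_nhds]
  exact tendsto_setIntegral_U_smul_indicator hD ν η hs hf (continuousAt_const.congr hind.symm)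

end ApproximateIdentity

theorem pAbs_delta_initial_condition_general {E : Type*} [NormedAddCommGroup E] [NormedSpace ℝ E]
    [CompleteSpace E] {D L x₀ : ℝ} (ν : ℝ) (hD : 0 < D) (hx₀ : x₀ < L) {f : ℝ → E}
    (hf : MemLp f ∞ (volume.restrict (Set.Iic L))) (hfx₀ : ContinuousAt f x₀) :
    Tendsto (fun t => ∫ x in Set.Iic L, pAbs D ν L x₀ x t • f x) (𝓝[>] 0) (𝓝 (f x₀)) := by
  have hsource := tendsto_setIntegral_U_smul_of_mem_nhds hD ν measurableSet_Iic (Iic_mem_nhds hx₀)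
    hf hfx₀
  have himage : Tendsto (fun t => ∫ x in Set.Iic L, U D ν x t (2 * L - x₀) • f x)
      (𝓝[>] 0) (𝓝 0) := by
    refine tendsto_setIntegral_U_smul_of_compl_mem_nhds hD ν measurableSet_Iic ?_ hf
    rw [Set.compl_Iic]
    exact Ioi_mem_nhds (by linarith)
  have hlim := hsource.sub (himage.const_smul (rexp ((ν / D) * (L - x₀))))
  rw [smul_zero, sub_zero] at hlim
  refine hlim.congr' ?_
  filter_upwards [self_mem_nhdsWithin] with t (ht : 0 < t)
  have hint (η : ℝ) := integrableOn_U_smul hD.le ht.le ν η hf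
  simp only [pAbs, sub_smul, mul_smul]
  rw [integral_sub (hint _), integral_smul]
  exact (hint _).smul (rexp ((ν / D) * (L - x₀)))

/-- The absorbing-boundary solution satisfies the Dirac delta initial condition at `x₀`:
for every bounded continuous `f : ℝ → ℝ`, `∫_{−∞}^{L} f(x) p(x, t) dx → f(x₀)` as `t → 0⁺`. -/
theorem pAbs_delta_initial_condition (D ν L x₀ : ℝ) (hD : 0 < D) (hx₀ : x₀ < L)
    (f : ℝ → ℝ) (hf : Continuous f) (hbdd : ∃ M : ℝ, ∀ x : ℝ, |f x| ≤ M) :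
    Tendsto (fun t : ℝ => ∫ x in Set.Iic L, f x * pAbs D ν L x₀ x t)
      (𝓝[>] 0) (𝓝 (f x₀)) := by
  obtain ⟨M, hM⟩ := hbdd
  simpa only [smul_eq_mul, mul_comm] using pAbs_delta_initial_condition_general ν hD hx₀
    (memLp_top_of_bound hf.aestronglyMeasurable M (ae_of_all _ hM)) hf.continuousAt
end

section
/- For every x ∈ ℝ and t > 0, the Robin-boundary solution p = p₁ + p₂ + p₃ satisfies the Fokker–Planck equation ∂p/∂t (x, t) = −ν · ∂p/∂x (x, t) + D · ∂²p/∂x² (x, t). -/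
/-!
The equation is linear, so `p₁`, `p₂` and `p₃` can be treated separately. It has a scaling symmetry:
in the moving, rescaled variable `w = (x - η - νt) / √(4Dt)`, the function `t ^ a * F w` is a
solution as soon as `F'' + 2 w F' = 4 a F`. For `a = -1/2` and `F = exp (-w ^ 2)` it is the kernel
`U` up to a constant, which settles `p₁` and `p₂`; for `a = 0`, `η = r` and
`F = ∫_{-∞}^w exp (-z ^ 2) dz` it is `∫_r^∞ U dη` up to a constant. Completing the square, the
exponential weight in `p₃` amounts to changing the drift from `ν` to `ν - 2Dk`, `k = α / β`, and
multiplying by an exponential function of `(x, t)`; this multiplication carries solutions with drift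
`ν - 2Dk` to solutions with drift `ν`. So no differentiation under the integral sign is needed.
-/

open Real MeasureTheory

/-- First term of the Robin-boundary solution: `p₁(x, t) = U(x, t, x₀)`. -/
noncomputable def p1 (D ν x₀ : ℝ) (x t : ℝ) : ℝ := U D ν x t x₀

/-- Second term: `p₂(x, t) = e^{(ν/D)(L − x₀)} U(x, t, 2L − x₀)`. -/
noncomputable def p2 (D ν L x₀ : ℝ) (x t : ℝ) : ℝ :=
  Real.exp ((ν / D) * (L - x₀)) * U D ν x t (2 * L - x₀)

/-- Third term:
`p₃(x, t) = 2(α/β + ν/(2D)) e^{(ν/D)(L − x₀)} ∫_{2L − x₀}^{∞} e^{(α/β)(η − (2L − x₀))} U(x, t, η) dη`. -/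
noncomputable def p3 (D ν L x₀ α β : ℝ) (x t : ℝ) : ℝ :=
  2 * (α / β + ν / (2 * D)) * Real.exp ((ν / D) * (L - x₀)) *
    ∫ η in Set.Ici (2 * L - x₀), Real.exp ((α / β) * (η - (2 * L - x₀))) * U D ν x t η

/-- The Robin-boundary solution `p = p₁ + p₂ + p₃`. -/
noncomputable def pRobin (D ν L x₀ α β : ℝ) (x t : ℝ) : ℝ :=
  p1 D ν x₀ x t + p2 D ν L x₀ x t + p3 D ν L x₀ α β x t

lemma hasDerivAt_integral_Iic {E : Type*} [NormedAddCommGroup E] [NormedSpace ℝ E]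
    [CompleteSpace E] {f : ℝ → E} {a : ℝ} (hf : Integrable f) (ha : ContinuousAt f a) :
    HasDerivAt (fun b => ∫ x in Set.Iic b, f x) (f a) a := by
  have hsplit (b : ℝ) :
      ∫ x in Set.Iic b, f x = (∫ x in Set.Iic a, f x) + ∫ x in a..b, f x := by
    rw [← intervalIntegral.integral_Iic_sub_Iic hf.integrableOn hf.integrableOn,
      add_sub_cancel]
  rw [funext hsplit]
  exact (intervalIntegral.integral_hasDerivAt_right hf.intervalIntegrable
    hf.aestronglyMeasurable.stronglyMeasurableAtFilter ha).const_add _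

lemma integral_Ici_comp_sub_div {E : Type*} [NormedAddCommGroup E] [NormedSpace ℝ E]
    (f : ℝ → E) (c r : ℝ) {s : ℝ} (hs : 0 < s) :
    ∫ x in Set.Ici r, f ((c - x) / s) = s • ∫ z in Set.Iic ((c - r) / s), f z := by
  have hpre : (fun x => (c - x) / s) ⁻¹' Set.Iic ((c - r) / s) = Set.Ici r := by
    ext x
    rw [Set.mem_preimage, Set.mem_Iic, div_le_div_iff_of_pos_right hs, sub_le_sub_iff_left,
      Set.mem_Ici]
  let g : ℝ → E := (Set.Iic ((c - r) / s)).indicator f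
  calc ∫ x in Set.Ici r, f ((c - x) / s)
      = ∫ x, g ((c - x) / s) := by
        rw [← integral_indicator measurableSet_Ici, ← hpre]
        rfl
    _ = ∫ x, g (x / s) := integral_sub_left_eq_self (fun x => g (x / s)) volume c
    _ = s • ∫ z in Set.Iic ((c - r) / s), f z := by
        rw [Measure.integral_comp_div, abs_of_pos hs, integral_indicator measurableSet_Iic]

/-- Classical solutions `f x t` of the Fokker–Planck equation `∂ₜf = -ν ∂ₓf + D ∂ₓ²f` on
`ℝ × (0, ∞)`. The functions `fx = ∂ₓf` and `fxx = ∂ₓ²f` are required to exist, so that no junk value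
of `deriv` can enter. -/
def SolvesFokkerPlanck (D ν : ℝ) (f : ℝ → ℝ → ℝ) : Prop :=
  ∃ fx fxx : ℝ → ℝ → ℝ, ∀ x t, 0 < t →
    HasDerivAt (fun y => f y t) (fx x t) x ∧
    HasDerivAt (fun y => fx y t) (fxx x t) x ∧
    HasDerivAt (fun τ => f x τ) (-ν * fx x t + D * fxx x t) t

namespace SolvesFokkerPlanck

variable {D ν : ℝ} {f g : ℝ → ℝ → ℝ}

lemma add (hf : SolvesFokkerPlanck D ν f) (hg : SolvesFokkerPlanck D ν g) :
    SolvesFokkerPlanck D ν (fun x t => f x t + g x t) := by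
  obtain ⟨fx, fxx, hf⟩ := hf
  obtain ⟨gx, gxx, hg⟩ := hg
  refine ⟨fun x t => fx x t + gx x t, fun x t => fxx x t + gxx x t, fun x t ht => ?_⟩
  obtain ⟨hfx, hfxx, hft⟩ := hf x t ht
  obtain ⟨hgx, hgxx, hgt⟩ := hg x t ht
  exact ⟨hfx.add hgx, hfxx.add hgxx, (hft.add hgt).congr_deriv (by ring)⟩

lemma const_mul (c : ℝ) (hf : SolvesFokkerPlanck D ν f) :
    SolvesFokkerPlanck D ν (fun x t => c * f x t) := by
  obtain ⟨fx, fxx, hf⟩ := hf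
  refine ⟨fun x t => c * fx x t, fun x t => c * fxx x t, fun x t ht => ?_⟩
  obtain ⟨hfx, hfxx, hft⟩ := hf x t ht
  exact ⟨hfx.const_mul c, hfxx.const_mul c, (hft.const_mul c).congr_deriv (by ring)⟩

lemma congr (hf : SolvesFokkerPlanck D ν f) (h : ∀ x t, 0 < t → g x t = f x t) :
    SolvesFokkerPlanck D ν g := by
  obtain ⟨fx, fxx, hf⟩ := hf
  refine ⟨fx, fxx, fun x t ht => ?_⟩
  obtain ⟨hfx, hfxx, hft⟩ := hf x t ht
  refine ⟨hfx.congr_of_eventuallyEq (.of_forall fun y => h y t ht), hfxx,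
    hft.congr_of_eventuallyEq ?_⟩
  filter_upwards [lt_mem_nhds ht] with τ hτ using h x τ hτ

lemma deriv_eq (hf : SolvesFokkerPlanck D ν f) (x : ℝ) {t : ℝ} (ht : 0 < t) :
    deriv (fun τ => f x τ) t =
      -ν * deriv (fun y => f y t) x + D * deriv (deriv (fun y => f y t)) x := by
  obtain ⟨fx, fxx, hf⟩ := hf
  have deriv_space : deriv (fun y => f y t) = fun y => fx y t :=
    funext fun y => (hf y t ht).1.deriv
  obtain ⟨-, hfxx, hft⟩ := hf x t ht
  rw [deriv_space, hft.deriv, hfxx.deriv]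

lemma exp_mul {k : ℝ} (r : ℝ) (hf : SolvesFokkerPlanck D (ν - 2 * D * k) f) :
    SolvesFokkerPlanck D ν
      (fun x t => exp (k * (x - r - ν * t) + D * k ^ 2 * t) * f x t) := by
  obtain ⟨fx, fxx, hf⟩ := hf
  let e : ℝ → ℝ → ℝ := fun x t => exp (k * (x - r - ν * t) + D * k ^ 2 * t)
  refine ⟨fun x t => e x t * (k * f x t + fx x t),
    fun x t => e x t * (k ^ 2 * f x t + 2 * k * fx x t + fxx x t), fun x t ht => ?_⟩
  have hex : HasDerivAt (fun y => e y t) (e x t * k) x := by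
    simpa using (((((hasDerivAt_id x).sub_const r).sub_const (ν * t)).const_mul k).add_const
      (D * k ^ 2 * t)).exp
  have het : HasDerivAt (fun τ => e x τ) (e x t * (-k * ν + D * k ^ 2)) t := by
    simpa using (((((hasDerivAt_id t).const_mul ν).const_sub (x - r)).const_mul k).add
      ((hasDerivAt_id t).const_mul (D * k ^ 2))).exp
  obtain ⟨hfx, hfxx, hft⟩ := hf x t ht
  exact ⟨(hex.mul hfx).congr_deriv (by ring),
    (hex.mul ((hfx.const_mul k).fun_add hfxx)).congr_deriv (by ring),
    (het.mul hft).congr_deriv (by ring)⟩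

end SolvesFokkerPlanck

/-- The similarity variable `w = (x - η - νt) / √(4Dt)`: the position relative to a point which
starts at `η` and drifts with velocity `ν`, in units of the diffusion length. -/
noncomputable def similarityVar (D ν η x t : ℝ) : ℝ := (x - η - ν * t) / √(4 * D * t)

lemma hasDerivAt_similarityVar_space (D ν η x t : ℝ) :
    HasDerivAt (fun y => similarityVar D ν η y t) (√(4 * D * t))⁻¹ x := by
  simpa [similarityVar] using
    (((hasDerivAt_id x).sub_const η).sub_const (ν * t)).div_const √(4 * D * t)

lemma hasDerivAt_similarityVar_time {D : ℝ} (ν η x : ℝ) {t : ℝ} (hD : 0 < D) (ht : 0 < t) :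
    HasDerivAt (fun τ => similarityVar D ν η x τ)
      (-ν / √(4 * D * t) - similarityVar D ν η x t / (2 * t)) t := by
  have hs : 0 < √(4 * D * t) := by positivity
  have hpos : HasDerivAt (fun τ => x - η - ν * τ) (-ν) t := by
    simpa using ((hasDerivAt_id t).const_mul ν).const_sub (x - η)
  have hsqrt : HasDerivAt (fun τ => √(4 * D * τ)) (4 * D / (2 * √(4 * D * t))) t := by
    simpa using ((hasDerivAt_id t).const_mul (4 * D)).sqrt (mul_pos (by positivity) ht).ne'
  refine (hpos.div hsqrt hs.ne').congr_deriv ?_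
  have hsq : √(4 * D * t) ^ 2 = 4 * D * t := Real.sq_sqrt (by positivity)
  rw [similarityVar]
  field_simp
  rw [hsq]
  ring

lemma solvesFokkerPlanck_rpow_mul_comp_similarityVar {D a : ℝ} (ν η : ℝ) {F F' : ℝ → ℝ}
    (hD : 0 < D) (hF : ∀ w, HasDerivAt F (F' w) w)
    (hF' : ∀ w, HasDerivAt F' (4 * a * F w - 2 * w * F' w) w) :
    SolvesFokkerPlanck D ν (fun x t => t ^ a * F (similarityVar D ν η x t)) := by
  let w := similarityVar D ν η
  refine ⟨fun x t => t ^ a * (F' (w x t) * (√(4 * D * t))⁻¹),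
    fun x t => t ^ a * ((4 * a * F (w x t) - 2 * w x t * F' (w x t)) / (4 * D * t)),
    fun x t ht => ?_⟩
  have hwx : HasDerivAt (fun y => w y t) (√(4 * D * t))⁻¹ x :=
    hasDerivAt_similarityVar_space D ν η x t
  have hwt : HasDerivAt (fun τ => w x τ) (-ν / √(4 * D * t) - w x t / (2 * t)) t :=
    hasDerivAt_similarityVar_time ν η x hD ht
  have hpow : HasDerivAt (fun τ : ℝ => τ ^ a) (a * (t ^ a / t)) t := by
    simpa [rpow_sub_one ht.ne'] using hasDerivAt_rpow_const (p := a) (.inl ht.ne')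
  refine ⟨((hF _).comp x hwx).const_mul _,
    ((((hF' _).comp x hwx).mul_const _).const_mul _).congr_deriv ?_,
    (hpow.mul ((hF _).comp t hwt)).congr_deriv ?_⟩
  · rw [mul_assoc _ _⁻¹, ← mul_inv, Real.mul_self_sqrt (by positivity), ← div_eq_mul_inv]
  · simp only [Function.comp_apply]
    field_simp
    ring

lemma U_eq_inv_sqrt_mul_exp {D t : ℝ} (ν x η : ℝ) (hD : 0 ≤ D) (ht : 0 ≤ t) :
    U D ν x t η = (√(4 * π * D * t))⁻¹ * exp (-similarityVar D ν η x t ^ 2) := by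
  rw [U, similarityVar, div_pow, Real.sq_sqrt (by positivity), neg_div, one_div]

lemma hasDerivAt_exp_neg_sq (w : ℝ) :
    HasDerivAt (fun z => exp (-z ^ 2)) (-2 * w * exp (-w ^ 2)) w := by
  simpa [mul_comm] using (hasDerivAt_pow 2 w).neg.exp

lemma solvesFokkerPlanck_U {D : ℝ} (ν η : ℝ) (hD : 0 < D) :
    SolvesFokkerPlanck D ν (fun x t => U D ν x t η) := by
  have hF' (w : ℝ) : HasDerivAt (fun z => -2 * z * exp (-z ^ 2))
      (4 * (-1 / 2) * exp (-w ^ 2) - 2 * w * (-2 * w * exp (-w ^ 2))) w :=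
    (((hasDerivAt_id w).const_mul (-2)).mul (hasDerivAt_exp_neg_sq w)).congr_deriv
      (by simp only [id]; ring)
  refine ((solvesFokkerPlanck_rpow_mul_comp_similarityVar ν η hD hasDerivAt_exp_neg_sq
    hF').const_mul (√(4 * π * D))⁻¹).congr fun x t ht => ?_
  have hpow : t ^ (-1 / 2 : ℝ) = (√t)⁻¹ := by
    rw [neg_div, rpow_neg ht.le, sqrt_eq_rpow]
  rw [U_eq_inv_sqrt_mul_exp ν x η hD.le ht.le, Real.sqrt_mul (by positivity), hpow]
  ring

/-- The Gaussian integral `∫_{-∞}^w e^{-z²} dz`, i.e. `(√π / 2) erfc (-w)`; it is left unnormalized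
to keep its derivative free of constants. -/
noncomputable def gaussPrimitive (w : ℝ) : ℝ := ∫ z in Set.Iic w, exp (-z ^ 2)

lemma hasDerivAt_gaussPrimitive (w : ℝ) : HasDerivAt gaussPrimitive (exp (-w ^ 2)) w :=
  hasDerivAt_integral_Iic (by simpa using integrable_exp_neg_mul_sq one_pos) (by fun_prop)

lemma integral_Ici_U {D t : ℝ} (ν r x : ℝ) (hD : 0 < D) (ht : 0 < t) :
    ∫ η in Set.Ici r, U D ν x t η = (√π)⁻¹ * gaussPrimitive (similarityVar D ν r x t) := by
  have hs : 0 < √(4 * D * t) := by positivity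
  have hsqrt : √(4 * π * D * t) = √π * √(4 * D * t) := by
    rw [← Real.sqrt_mul pi_pos.le]
    ring_nf
  simp only [U_eq_inv_sqrt_mul_exp ν x _ hD.le ht.le, similarityVar, sub_right_comm x _ (ν * t)]
  rw [integral_const_mul, integral_Ici_comp_sub_div (fun z => exp (-z ^ 2)) _ _ hs, smul_eq_mul,
    ← gaussPrimitive, hsqrt]
  field_simp

lemma solvesFokkerPlanck_integral_Ici_U {D : ℝ} (ν r : ℝ) (hD : 0 < D) :
    SolvesFokkerPlanck D ν (fun x t => ∫ η in Set.Ici r, U D ν x t η) := by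
  have hF' (w : ℝ) : HasDerivAt (fun z => exp (-z ^ 2))
      (4 * 0 * gaussPrimitive w - 2 * w * exp (-w ^ 2)) w :=
    (hasDerivAt_exp_neg_sq w).congr_deriv (by ring)
  refine ((solvesFokkerPlanck_rpow_mul_comp_similarityVar ν r hD hasDerivAt_gaussPrimitive
    hF').const_mul (√π)⁻¹).congr fun x t ht => ?_
  rw [integral_Ici_U ν r x hD ht, rpow_zero, one_mul]

lemma exp_mul_U {D t : ℝ} (ν k r x η : ℝ) (hD : D ≠ 0) (ht : t ≠ 0) :
    exp (k * (η - r)) * U D ν x t η =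
      exp (k * (x - r - ν * t) + D * k ^ 2 * t) * U D (ν - 2 * D * k) x t η := by
  rw [U, U, mul_left_comm, mul_left_comm (exp _), ← exp_add, ← exp_add]
  congr 2
  field_simp
  ring

lemma solvesFokkerPlanck_integral_Ici_exp_mul_U {D : ℝ} (ν k r : ℝ) (hD : 0 < D) :
    SolvesFokkerPlanck D ν
      (fun x t => ∫ η in Set.Ici r, exp (k * (η - r)) * U D ν x t η) := by
  refine ((solvesFokkerPlanck_integral_Ici_U (ν - 2 * D * k) r hD).exp_mul r).congr
    fun x t ht => ?_
  simp only [exp_mul_U ν k r x _ hD.ne' ht.ne', integral_const_mul]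

theorem pRobin_fokkerPlanck_general {D β : ℝ} (ν L x₀ α : ℝ) (hD : 0 < D) (_hβ : β ≠ 0) :
    SolvesFokkerPlanck D ν (pRobin D ν L x₀ α β) := by
  have hp₁ : SolvesFokkerPlanck D ν (p1 D ν x₀) := solvesFokkerPlanck_U ν x₀ hD
  have hp₂ : SolvesFokkerPlanck D ν (p2 D ν L x₀) :=
    (solvesFokkerPlanck_U ν (2 * L - x₀) hD).const_mul _
  have hp₃ : SolvesFokkerPlanck D ν (p3 D ν L x₀ α β) :=
    (solvesFokkerPlanck_integral_Ici_exp_mul_U ν (α / β) (2 * L - x₀) hD).const_mul _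
  exact (hp₁.add hp₂).add hp₃

/-- For every `x ∈ ℝ` and `t > 0`, the Robin-boundary solution `p = p₁ + p₂ + p₃` satisfies
the Fokker–Planck equation `∂p/∂t = −ν ∂p/∂x + D ∂²p/∂x²`. -/
theorem pRobin_fokkerPlanck (D ν L x₀ α β : ℝ) (hD : 0 < D) (hx₀ : x₀ < L) (hβ : β ≠ 0) :
    ∀ (x t : ℝ), 0 < t →
      deriv (fun τ => pRobin D ν L x₀ α β x τ) t =
        -ν * deriv (fun y => pRobin D ν L x₀ α β y t) x
          + D * deriv (deriv (fun y => pRobin D ν L x₀ α β y t)) x := by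
  intro x t ht
  exact (pRobin_fokkerPlanck_general ν L x₀ α hD hβ).deriv_eq x ht
end

section
/- For every R > 0, σ > 0 and θ > 0, the KDKMC diffusion coefficient is strictly positive: D(θ) = (σ²/(R²θ)) · (2e^{−Rθ} + Rθ + Rθe^{−Rθ} − 2) > 0. -/
/-!
The bracket in `D(θ)` equals `(1 + e^{−Rθ}) (Rθ − 2 tanh (Rθ/2))`, so that
`D(θ) = (σ²/R) (1 + e^{−Rθ}) (1 − tanh (Rθ/2) / (Rθ/2))`, and `tanh y / y < 1` for `y ≠ 0`: as
`tanh` is odd, it suffices to take `y > 0`, where `tanh y < y` is the logarithm bound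
`2u / (u + 2) < log (1 + u)` at `u = e^{2y} − 1`.
-/

open Real

/-- The KDKMC diffusion coefficient
`D(θ) = (σ²/(R²θ)) (2e^{−Rθ} + Rθ + Rθe^{−Rθ} − 2)`. -/
noncomputable def Dkdkmc (R σ θ : ℝ) : ℝ :=
  (σ ^ 2 / (R ^ 2 * θ)) *
    (2 * Real.exp (-R * θ) + R * θ + R * θ * Real.exp (-R * θ) - 2)

lemma tanh_eq_exp_two_mul (x : ℝ) : tanh x = (exp (2 * x) - 1) / (exp (2 * x) + 1) := by
  have hexp : exp (2 * x) = exp x * exp x := by rw [two_mul, exp_add]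
  rw [tanh_eq, exp_neg, hexp]
  field_simp

lemma tanh_lt_self {x : ℝ} (hx : 0 < x) : tanh x < x := by
  have hexp : 0 < exp (2 * x) - 1 := sub_pos.2 (one_lt_exp_iff.2 (by positivity))
  have hlog := lt_log_one_add_of_pos hexp
  rw [add_sub_cancel, log_exp, mul_div_assoc] at hlog
  calc tanh x = (exp (2 * x) - 1) / (exp (2 * x) - 1 + 2) := by
        rw [tanh_eq_exp_two_mul]; congr 1; ring
    _ < x := lt_of_mul_lt_mul_left hlog zero_le_two

lemma tanh_div_self_lt_one {x : ℝ} (hx : x ≠ 0) : tanh x / x < 1 := by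
  rcases hx.lt_or_gt with hneg | hpos
  · rw [div_lt_one_of_neg hneg]
    simpa only [tanh_neg, neg_lt_neg_iff] using tanh_lt_self (neg_pos.2 hneg)
  · exact (div_lt_one hpos).2 (tanh_lt_self hpos)

lemma one_sub_exp_neg_eq_mul_tanh (x : ℝ) :
    1 - exp (-x) = (1 + exp (-x)) * tanh (x / 2) := by
  rw [tanh_eq_exp_two_mul, mul_div_cancel₀ x two_ne_zero, exp_neg]
  field_simp

lemma Dkdkmc_eq_mul_one_sub_tanh_div {R θ : ℝ} (σ : ℝ) (hR : R ≠ 0) (hθ : θ ≠ 0) :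
    Dkdkmc R σ θ =
      σ ^ 2 / R * (1 + exp (-(R * θ))) * (1 - tanh (R * θ / 2) / (R * θ / 2)) := by
  have hbracket : 2 * exp (-(R * θ)) + R * θ + R * θ * exp (-(R * θ)) - 2 =
      (1 + exp (-(R * θ))) * (R * θ - 2 * tanh (R * θ / 2)) := by
    linear_combination -2 * one_sub_exp_neg_eq_mul_tanh (R * θ)
  rw [Dkdkmc, neg_mul, hbracket]
  field_simp

theorem Dkdkmc_pos_general {R σ θ : ℝ} (hR : 0 < R) (hσ : σ ≠ 0) (hθ : θ ≠ 0) :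
    0 < Dkdkmc R σ θ := by
  have htanh : 0 < 1 - tanh (R * θ / 2) / (R * θ / 2) :=
    sub_pos.2 (tanh_div_self_lt_one (div_ne_zero (mul_ne_zero hR.ne' hθ) two_ne_zero))
  rw [Dkdkmc_eq_mul_one_sub_tanh_div σ hR.ne' hθ]
  positivity

/-- For every `R > 0`, `σ > 0` and `θ > 0`, the KDKMC diffusion coefficient is
strictly positive. -/
theorem Dkdkmc_pos :
    ∀ (R σ θ : ℝ), 0 < R → 0 < σ → 0 < θ → 0 < Dkdkmc R σ θ :=
  fun _ _ _ hR hσ hθ ↦ Dkdkmc_pos_general hR hσ.ne' hθ.ne'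
end

section
/- For every R > 0 and σ > 0, the KDKMC diffusion coefficient is strictly smaller than the fluid diffusion coefficient for every time step: D(θ) < σ²/R for all θ > 0, and D(θ) converges to the fluid diffusion coefficient σ²/R in the limit θ → ∞. -/
open Real Filter Topology

/-!
The ratio of `D(θ)` to the fluid coefficient `σ²/R` depends only on the mean number of collisions
`x = Rθ` in a time step, and equals `1 - (2 - (2 + x) e^{-x}) / x`. Since `e^x ≥ 1 + x`, the
quantity `(2 + x) e^{-x}` lies strictly between `0` and `2` for `x > 0`, so the ratio lies strictly
between `1 - 2 / x` and `1`.
-/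

/-- The ratio of the KDKMC diffusion coefficient to the fluid one, as a function of the
dimensionless time step `x = Rθ`. It is only meaningful for `x ≠ 0`: division by zero makes its
value at `0` equal to `0`. -/
noncomputable def diffusionRatio (x : ℝ) : ℝ :=
  (2 * exp (-x) + x + x * exp (-x) - 2) / x

lemma Dkdkmc_eq_fluid_mul_diffusionRatio (R σ θ : ℝ) :
    Dkdkmc R σ θ = σ ^ 2 / R * diffusionRatio (R * θ) := by
  simp only [Dkdkmc, diffusionRatio, neg_mul]
  ring

lemma two_add_mul_exp_neg_lt_two {x : ℝ} (hx : 0 < x) : (2 + x) * exp (-x) < 2 := by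
  rw [exp_neg, ← div_eq_mul_inv, div_lt_iff₀ (exp_pos x)]
  linarith [add_one_le_exp x]

lemma diffusionRatio_lt_one {x : ℝ} (hx : 0 < x) : diffusionRatio x < 1 := by
  rw [diffusionRatio, div_lt_one hx]
  linarith [two_add_mul_exp_neg_lt_two hx]

lemma one_sub_two_div_lt_diffusionRatio {x : ℝ} (hx : 0 < x) :
    1 - 2 / x < diffusionRatio x := by
  have hexp : 0 < (2 + x) * exp (-x) := by positivity
  rw [diffusionRatio, one_sub_div hx.ne', div_lt_div_iff_of_pos_right hx]
  linarith

lemma tendsto_diffusionRatio_atTop : Tendsto diffusionRatio atTop (𝓝 1) := by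
  have hlower : Tendsto (fun x : ℝ => 1 - 2 / x) atTop (𝓝 1) := by
    simpa only [id, sub_zero] using (tendsto_id.const_div_atTop (2 : ℝ)).const_sub 1
  refine tendsto_of_tendsto_of_tendsto_of_le_of_le' hlower tendsto_const_nhds ?_ ?_
  · filter_upwards [eventually_gt_atTop 0] with x hx
    exact (one_sub_two_div_lt_diffusionRatio hx).le
  · filter_upwards [eventually_gt_atTop 0] with x hx
    exact (diffusionRatio_lt_one hx).le

/-- For every `R > 0` and `σ > 0`, the KDKMC diffusion coefficient is strictly smaller than
the fluid diffusion coefficient `σ²/R` for every time step `θ > 0`, and converges to the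
fluid diffusion coefficient as `θ → ∞`. -/
theorem Dkdkmc_lt_fluid_and_tendsto (R σ : ℝ) (hR : 0 < R) (hσ : 0 < σ) :
    (∀ θ : ℝ, 0 < θ → Dkdkmc R σ θ < σ ^ 2 / R) ∧
      Tendsto (fun θ => Dkdkmc R σ θ) atTop (𝓝 (σ ^ 2 / R)) := by
  simp only [Dkdkmc_eq_fluid_mul_diffusionRatio]
  constructor
  · intro θ hθ
    have hfluid : 0 < σ ^ 2 / R := by positivity
    exact mul_lt_of_lt_one_right hfluid (diffusionRatio_lt_one (mul_pos hR hθ))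
  · have hratio : Tendsto (fun θ => diffusionRatio (R * θ)) atTop (𝓝 1) :=
      tendsto_diffusionRatio_atTop.comp (tendsto_id.const_mul_atTop hR)
    simpa only [mul_one] using hratio.const_mul (σ ^ 2 / R)
end

section
/- For every R > 0 and σ > 0, the KDKMC diffusion coefficient vanishes in the kinetic limit of small time steps, with the precise rate lim_{θ → 0⁺} D(θ)/θ² = σ²R/6; in particular D(θ) → 0 as θ → 0⁺. -/
open Real Filter Topology

/-- The remainder of the exponential series after its first `n` terms, used to expand the bracket
of `Dkdkmc`. The index is chosen so that the remainder has order `yⁿ` at the origin: the Taylor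
polynomial subtracted has degree `n - 1`. -/
noncomputable def expRemainder (n : ℕ) (y : ℝ) : ℝ :=
  Real.exp y - ∑ i ∈ Finset.range n, y ^ i / i.factorial

lemma expRemainder_succ (n : ℕ) (y : ℝ) :
    expRemainder (n + 1) y = expRemainder n y - y ^ n / n.factorial := by
  rw [expRemainder, expRemainder, Finset.sum_range_succ, sub_sub]

lemma tendsto_expRemainder_div_pow (n : ℕ) :
    Tendsto (fun y => expRemainder n y / y ^ n) (𝓝[≠] 0) (𝓝 (1 / n.factorial)) := by
  have hnext : Tendsto (fun y => expRemainder (n + 1) y / y ^ n) (𝓝[≠] 0) (𝓝 0) :=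
    (Real.exp_sub_sum_range_succ_isLittleO_pow n).tendsto_div_nhds_zero.mono_left
      nhdsWithin_le_nhds
  have hsum := hnext.add_const (1 / (n.factorial : ℝ))
  rw [zero_add] at hsum
  refine hsum.congr' ?_
  filter_upwards [self_mem_nhdsWithin] with y (hy : y ≠ 0)
  rw [expRemainder_succ]
  field_simp
  ring

/-- The terms of order below three in the bracket of `Dkdkmc` cancel: what is left combines the
third remainder with `Rθ` times the second, both of order `θ³`. -/
lemma Dkdkmc_div_sq {R θ : ℝ} (hR : R ≠ 0) (hθ : θ ≠ 0) (σ : ℝ) :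
    Dkdkmc R σ θ / θ ^ 2 = σ ^ 2 * R *
      (expRemainder 2 (-R * θ) / (-R * θ) ^ 2 - 2 * (expRemainder 3 (-R * θ) / (-R * θ) ^ 3)) := by
  have hbracket : 2 * Real.exp (-R * θ) + R * θ + R * θ * Real.exp (-R * θ) - 2 =
      2 * expRemainder 3 (-R * θ) + R * θ * expRemainder 2 (-R * θ) := by
    simp only [expRemainder, Finset.sum_range_succ, Finset.sum_range_zero, Nat.factorial]
    push_cast
    ring
  rw [Dkdkmc, hbracket]
  field_simp
  ring

lemma tendsto_Dkdkmc_div_sq {R : ℝ} (hR : R ≠ 0) (σ : ℝ) :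
    Tendsto (fun θ => Dkdkmc R σ θ / θ ^ 2) (𝓝[≠] 0) (𝓝 (σ ^ 2 * R / 6)) := by
  have hscale : Tendsto (fun θ => -R * θ) (𝓝[≠] 0) (𝓝[≠] 0) := by
    simpa only [Tendsto, Homeomorph.coe_mulLeft₀, mul_zero] using
      ((Homeomorph.mulLeft₀ (-R) (neg_ne_zero.2 hR)).map_punctured_nhds_eq 0).le
  have hlim := (((tendsto_expRemainder_div_pow 2).comp hscale).sub
    (((tendsto_expRemainder_div_pow 3).comp hscale).const_mul 2)).const_mul (σ ^ 2 * R)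
  have hconst : σ ^ 2 * R * (1 / (Nat.factorial 2 : ℝ) - 2 * (1 / (Nat.factorial 3 : ℝ))) =
      σ ^ 2 * R / 6 := by
    norm_num [Nat.factorial]
    ring
  rw [hconst] at hlim
  refine hlim.congr' ?_
  filter_upwards [self_mem_nhdsWithin] with θ hθ using (Dkdkmc_div_sq hR hθ σ).symm

theorem Dkdkmc_small_timestep_limit_general (R σ : ℝ) (hR : R ≠ 0) :
    Tendsto (fun θ => Dkdkmc R σ θ / θ ^ 2) (𝓝[≠] 0) (𝓝 (σ ^ 2 * R / 6)) ∧
      Tendsto (fun θ => Dkdkmc R σ θ) (𝓝[≠] 0) (𝓝 0) := by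
  have hrate := tendsto_Dkdkmc_div_sq hR σ
  have hbigO : (fun θ => Dkdkmc R σ θ) =O[𝓝[≠] 0] fun θ => θ ^ 2 := by
    refine Asymptotics.isBigO_of_div_tendsto_nhds ?_ _ hrate
    filter_upwards [self_mem_nhdsWithin] with θ hθ hθ_sq
    exact absurd hθ_sq (pow_ne_zero 2 hθ)
  have hsq : Tendsto (fun θ : ℝ => θ ^ 2) (𝓝[≠] 0) (𝓝 0) :=
    ((continuous_pow 2).tendsto' 0 0 (zero_pow two_ne_zero)).mono_left nhdsWithin_le_nhds
  exact ⟨hrate, hbigO.trans_tendsto hsq⟩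

/-- For every `R > 0` and `σ > 0`, the KDKMC diffusion coefficient vanishes in the kinetic
limit of small time steps, with the precise rate `lim_{θ → 0⁺} D(θ)/θ² = σ²R/6`; in
particular `D(θ) → 0` as `θ → 0⁺`. -/
theorem Dkdkmc_small_timestep_limit (R σ : ℝ) (hR : 0 < R) (hσ : 0 < σ) :
    Tendsto (fun θ => Dkdkmc R σ θ / θ ^ 2) (𝓝[>] 0) (𝓝 (σ ^ 2 * R / 6)) ∧
      Tendsto (fun θ => Dkdkmc R σ θ) (𝓝[>] 0) (𝓝 0) :=
  (Dkdkmc_small_timestep_limit_general R σ hR.ne').imp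
    (·.mono_left (nhdsGT_le_nhdsNE 0)) (·.mono_left (nhdsGT_le_nhdsNE 0))
end
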